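/- Gaussian-mixture L^r estimate (analytic core of Proposition 3.2 for regularity s = 0): Let d ≥ 1, let r ∈ (1,∞) with conjugate exponent r' = r/(r−1), let 0 < κ ≤ c₀ and ε > 0. Let Λ be a Borel probability measure on ℝ^d, let M : ℝ^d → ℝ^d be Borel measurable, and let x ↦ V(x) be a Borel measurable map from ℝ^d into the real symmetric d×d matrices such that κ‖z‖² ≤ ⟨z, V(x)z⟩ ≤ c₀‖z‖² for all x, z ∈ ℝ^d. Then the mixture density a(y) := ∫_{ℝ^d} g(y; M(x), εV(x)) Λ(dx) satisfies (∫_{ℝ^d} a(y)^r dy)^{1/r} ≤ (2πκ)^{-d/2} (2πc₀/r)^{d/(2r)} · ε^{-d/(2r')}. -/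

import Mathlib

/-!
Uniform ellipticity gives `det (ε V) ≥ (ε κ)^d` (`pow_le_det`, through the eigenvalues) and
`⟪z, (ε V)⁻¹ z⟫ ≥ ‖z‖² / (ε c₀)` (`norm_sq_div_le_inner_inv`). Hence every component of the
mixture is bounded by `(2πεκ)^{-d/2}` times the isotropic profile
`exp (-‖y - M x‖² / (2 ε c₀))` (`gaussianDensityM_le`). Jensen's inequality in the probability
measure `Λ` moves the `r`-th power inside the integral over `x`, and after exchanging the integrals
the remaining integral over `y` is a translated Gaussian integral equal to `(2πεc₀/r)^{d/2}`
whatever the centre `M x` (`integral_integral_exp`). Taking the `r`-th root gives the bound.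
-/

open MeasureTheory
open scoped RealInnerProductSpace

/-- Multiplication of a vector of `ℝ^d` (with the Euclidean structure) by a matrix. -/
noncomputable def mulVecE {d : ℕ} (V : Matrix (Fin d) (Fin d) ℝ)
    (x : EuclideanSpace ℝ (Fin d)) : EuclideanSpace ℝ (Fin d) :=
  (WithLp.equiv 2 (Fin d → ℝ)).symm (V.mulVec (WithLp.equiv 2 (Fin d → ℝ) x))

/-- The Gaussian density with mean `m` and covariance matrix `V` on `ℝ^d`:
`g(y; m, V) = (2π)^{-d/2} (det V)^{-1/2} exp(-⟨y-m, V⁻¹(y-m)⟩/2)`. -/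
noncomputable def gaussianDensityM {d : ℕ} (m : EuclideanSpace ℝ (Fin d))
    (V : Matrix (Fin d) (Fin d) ℝ) (y : EuclideanSpace ℝ (Fin d)) : ℝ :=
  (2 * Real.pi) ^ (-(d : ℝ) / 2) * V.det ^ (-(1 : ℝ) / 2) *
    Real.exp (-⟪y - m, mulVecE V⁻¹ (y - m)⟫ / 2)

section Aux

variable {d : ℕ}

lemma mulVecE_smul_left (c : ℝ) (A : Matrix (Fin d) (Fin d) ℝ) (z : EuclideanSpace ℝ (Fin d)) :
    mulVecE (c • A) z = c • mulVecE A z := by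
  ext i
  simp [mulVecE, Matrix.smul_mulVec]

lemma mulVecE_sub_smul (A : Matrix (Fin d) (Fin d) ℝ) (w z : EuclideanSpace ℝ (Fin d)) (t : ℝ) :
    mulVecE A (w - t • z) = mulVecE A w - t • mulVecE A z := by
  ext i
  simp [mulVecE, Matrix.mulVec_sub, Matrix.mulVec_smul]

lemma inner_mulVecE_comm {A : Matrix (Fin d) (Fin d) ℝ} (hA : A.IsSymm)
    (w z : EuclideanSpace ℝ (Fin d)) : ⟪w, mulVecE A z⟫ = ⟪z, mulVecE A w⟫ := by
  have h : ∀ u v : EuclideanSpace ℝ (Fin d),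
      ⟪u, mulVecE A v⟫ = WithLp.ofLp u ⬝ᵥ A.mulVec (WithLp.ofLp v) := by
    intro u v
    simp [mulVecE, EuclideanSpace.inner_eq_star_dotProduct, dotProduct_comm]
  rw [h, h, Matrix.dotProduct_mulVec, ← Matrix.mulVec_transpose, hA.eq, dotProduct_comm]

/-- Every eigenvalue is at least `k`, and the determinant is their product. -/
lemma pow_le_det {A : Matrix (Fin d) (Fin d) ℝ} (hA : A.IsSymm) {k : ℝ} (hk : 0 < k)
    (h : ∀ z, k * ‖z‖ ^ 2 ≤ ⟪z, mulVecE A z⟫) : k ^ d ≤ A.det := by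
  have hH : A.IsHermitian := by
    rw [Matrix.IsHermitian, Matrix.conjTranspose_eq_transpose_of_trivial, hA.eq]
  have hev : ∀ i, k ≤ hH.eigenvalues i := by
    intro i
    have h1 := h (hH.eigenvectorBasis i)
    have h2 : mulVecE A (hH.eigenvectorBasis i) =
        hH.eigenvalues i • hH.eigenvectorBasis i := by
      have := hH.mulVec_eigenvectorBasis i
      ext j
      simpa [mulVecE] using congrFun this j
    rw [h2, real_inner_smul_right, real_inner_self_eq_norm_sq] at h1
    simpa using h1
  rw [hH.det_eq_prod_eigenvalues]
  calc k ^ d = ∏ _i : Fin d, k := by simp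
    _ ≤ ∏ i, hH.eigenvalues i := Finset.prod_le_prod (fun _ _ => hk.le) (fun i _ => hev i)
    _ = _ := by simp

/-- With `w = A⁻¹ z`, expanding `0 ≤ ⟪w - c⁻¹ z, A (w - c⁻¹ z)⟫` and using
`⟪z, A z⟫ ≤ c ‖z‖²` gives the claim. -/
lemma norm_sq_div_le_inner_inv {A : Matrix (Fin d) (Fin d) ℝ} (hA : A.IsSymm) {k c : ℝ}
    (hk : 0 < k) (hc : 0 < c)
    (h : ∀ z, k * ‖z‖ ^ 2 ≤ ⟪z, mulVecE A z⟫ ∧ ⟪z, mulVecE A z⟫ ≤ c * ‖z‖ ^ 2)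
    (z : EuclideanSpace ℝ (Fin d)) : ‖z‖ ^ 2 / c ≤ ⟪z, mulVecE A⁻¹ z⟫ := by
  have hdet : 0 < A.det := (pow_pos hk d).trans_le (pow_le_det hA hk fun z => (h z).1)
  set w := mulVecE A⁻¹ z with hw
  have hAw : mulVecE A w = z := by
    ext i
    simp [hw, mulVecE, Matrix.mulVec_mulVec, Matrix.mul_nonsing_inv A hdet.ne'.isUnit]
  have h0 : 0 ≤ ⟪w - c⁻¹ • z, mulVecE A (w - c⁻¹ • z)⟫ :=
    le_trans (by positivity) (h _).1
  have hcross : ⟪w, mulVecE A z⟫ = ‖z‖ ^ 2 := by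
    rw [inner_mulVecE_comm hA, hAw, real_inner_self_eq_norm_sq]
  rw [mulVecE_sub_smul, hAw] at h0
  simp only [inner_sub_left, inner_sub_right, real_inner_smul_left, real_inner_smul_right,
    hcross, real_inner_self_eq_norm_sq] at h0
  rw [real_inner_comm] at h0
  have h3 : c⁻¹ * (c⁻¹ * ⟪z, mulVecE A z⟫) ≤ c⁻¹ * ‖z‖ ^ 2 := by
    have := mul_le_mul_of_nonneg_left (h z).2 (inv_pos.2 hc).le
    rw [inv_mul_cancel_left₀ hc.ne'] at this
    gcongr
  rw [div_eq_inv_mul]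
  linarith

/-- Uniform ellipticity dominates the density by an isotropic Gaussian profile. -/
lemma gaussianDensityM_le {A : Matrix (Fin d) (Fin d) ℝ} (hA : A.IsSymm) {k c : ℝ}
    (hk : 0 < k) (hc : 0 < c)
    (h : ∀ z, k * ‖z‖ ^ 2 ≤ ⟪z, mulVecE A z⟫ ∧ ⟪z, mulVecE A z⟫ ≤ c * ‖z‖ ^ 2)
    (m y : EuclideanSpace ℝ (Fin d)) :
    0 ≤ gaussianDensityM m A y ∧ gaussianDensityM m A y ≤
      (2 * Real.pi * k) ^ (-(d : ℝ) / 2) * Real.exp (-(1 / (2 * c)) * ‖y - m‖ ^ 2) := by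
  have hle := pow_le_det hA hk fun z => (h z).1
  have hdet : 0 < A.det := (pow_pos hk d).trans_le hle
  have hdetpow : A.det ^ (-(1 : ℝ) / 2) ≤ k ^ (-(d : ℝ) / 2) := by
    have h1 := Real.rpow_le_rpow_of_nonpos (pow_pos hk d) hle
      (show -(1 : ℝ) / 2 ≤ 0 by norm_num)
    rwa [← Real.rpow_natCast, ← Real.rpow_mul hk.le,
      show (d : ℝ) * (-1 / 2) = -(d : ℝ) / 2 by ring] at h1
  unfold gaussianDensityM
  refine ⟨by positivity, ?_⟩
  rw [Real.mul_rpow (by positivity) hk.le]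
  have hinv := norm_sq_div_le_inner_inv hA hk hc h (y - m)
  have he : -⟪y - m, mulVecE A⁻¹ (y - m)⟫ / 2 ≤ -(1 / (2 * c)) * ‖y - m‖ ^ 2 := by
    have : -(1 / (2 * c)) * ‖y - m‖ ^ 2 = -(‖y - m‖ ^ 2 / c) / 2 := by field_simp
    rw [this]; linarith
  gcongr

lemma integrable_exp_neg_mul_sq_norm {b : ℝ} (hb : 0 < b) :
    Integrable fun y : EuclideanSpace ℝ (Fin d) => Real.exp (-b * ‖y‖ ^ 2) := by
  have h := GaussianFourier.integrable_cexp_neg_mul_sq_norm_add (V := EuclideanSpace ℝ (Fin d))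
    (b := (b : ℂ)) (by simpa using hb) 0 0
  refine h.norm.congr (Filter.Eventually.of_forall fun y => ?_)
  simp only [Complex.norm_exp]
  simp [← Complex.ofReal_pow]

/-- The mass in `y` does not depend on the centre `M x`, so it is integrable in `x` because `Λ` is
finite. -/
lemma integrable_prod_exp {b : ℝ} (hb : 0 < b)
    (Λ : Measure (EuclideanSpace ℝ (Fin d))) [IsProbabilityMeasure Λ]
    {M : EuclideanSpace ℝ (Fin d) → EuclideanSpace ℝ (Fin d)} (hM : Measurable M) :
    Integrable (fun p : EuclideanSpace ℝ (Fin d) × EuclideanSpace ℝ (Fin d) =>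
      Real.exp (-b * ‖p.2 - M p.1‖ ^ 2)) (Λ.prod volume) := by
  have hmeas : Measurable (fun p : EuclideanSpace ℝ (Fin d) × EuclideanSpace ℝ (Fin d) =>
      Real.exp (-b * ‖p.2 - M p.1‖ ^ 2)) := by fun_prop
  rw [integrable_prod_iff hmeas.aestronglyMeasurable]
  refine ⟨Filter.Eventually.of_forall fun x =>
    (integrable_exp_neg_mul_sq_norm hb).comp_sub_right (M x), ?_⟩
  simp only [Real.norm_eq_abs, Real.abs_exp]
  refine (integrable_const (∫ y : EuclideanSpace ℝ (Fin d), Real.exp (-b * ‖y‖ ^ 2))).congr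
    (Filter.Eventually.of_forall fun x => ?_)
  exact (integral_sub_right_eq_self
    (fun y : EuclideanSpace ℝ (Fin d) => Real.exp (-b * ‖y‖ ^ 2)) (M x)).symm

lemma integral_integral_exp {b : ℝ} (hb : 0 < b)
    (Λ : Measure (EuclideanSpace ℝ (Fin d))) [IsProbabilityMeasure Λ]
    {M : EuclideanSpace ℝ (Fin d) → EuclideanSpace ℝ (Fin d)} (hM : Measurable M) :
    ∫ y : EuclideanSpace ℝ (Fin d), ∫ x, Real.exp (-b * ‖y - M x‖ ^ 2) ∂Λ =
      (Real.pi / b) ^ ((d : ℝ) / 2) := by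
  rw [← integral_integral_swap
    (f := fun x y : EuclideanSpace ℝ (Fin d) => Real.exp (-b * ‖y - M x‖ ^ 2))
    (integrable_prod_exp hb Λ hM)]
  have h : ∀ x, ∫ y : EuclideanSpace ℝ (Fin d), Real.exp (-b * ‖y - M x‖ ^ 2) =
      (Real.pi / b) ^ ((d : ℝ) / 2) := by
    intro x
    rw [integral_sub_right_eq_self
      (fun y : EuclideanSpace ℝ (Fin d) => Real.exp (-b * ‖y‖ ^ 2)) (M x),
      GaussianFourier.integral_rexp_neg_mul_sq_norm hb]
    simp
  simp only [h, integral_const, probReal_univ, one_smul]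

end Aux

/-- Gaussian-mixture `L^r` estimate: for a probability measure `Λ` on `ℝ^d`,
a measurable mean map `M` and a measurable, uniformly elliptic covariance map
`V`, the mixture density `a(y) := ∫ g(y; M(x), εV(x)) Λ(dx)` satisfies
`‖a‖_{L^r} ≤ (2πκ)^{-d/2} (2πc₀/r)^{d/(2r)} ε^{-d/(2r')}`, with `r'` the
conjugate exponent of `r`. -/
theorem gaussian_mixture_Lr_estimate
    (d : ℕ) (hd : 1 ≤ d) (r r' κ c₀ ε : ℝ) (hr : 1 < r) (hr' : r' = r / (r - 1))
    (hκ : 0 < κ) (hκc : κ ≤ c₀) (hε : 0 < ε)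
    (Λ : Measure (EuclideanSpace ℝ (Fin d))) [IsProbabilityMeasure Λ]
    (M : EuclideanSpace ℝ (Fin d) → EuclideanSpace ℝ (Fin d)) (hM : Measurable M)
    (V : EuclideanSpace ℝ (Fin d) → Matrix (Fin d) (Fin d) ℝ)
    (hVmeas : ∀ i j, Measurable fun x => V x i j)
    (hVsymm : ∀ x, (V x).IsSymm)
    (hell : ∀ x z, κ * ‖z‖ ^ 2 ≤ ⟪z, mulVecE (V x) z⟫ ∧
      ⟪z, mulVecE (V x) z⟫ ≤ c₀ * ‖z‖ ^ 2) :
    (∫ y : EuclideanSpace ℝ (Fin d),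
        (∫ x, gaussianDensityM (M x) (ε • V x) y ∂Λ) ^ r) ^ (1 / r) ≤
      (2 * Real.pi * κ) ^ (-(d : ℝ) / 2) *
        (2 * Real.pi * c₀ / r) ^ ((d : ℝ) / (2 * r)) *
          ε ^ (-(d : ℝ) / (2 * r')) := by
  have hc : 0 < c₀ := hκ.trans_le hκc
  have hr0 : 0 < r := by linarith
  set b : ℝ := 1 / (2 * (ε * c₀)) with hb
  have hb0 : 0 < b := by positivity
  set C : ℝ := (2 * Real.pi * (ε * κ)) ^ (-(d : ℝ) / 2) with hC
  have hC0 : 0 < C := by positivity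
  have hg : ∀ x y, 0 ≤ gaussianDensityM (M x) (ε • V x) y ∧
      gaussianDensityM (M x) (ε • V x) y ≤ C * Real.exp (-b * ‖y - M x‖ ^ 2) := by
    intro x y
    refine gaussianDensityM_le ((hVsymm x).smul ε) (mul_pos hε hκ) (mul_pos hε hc) ?_ _ _
    intro z
    rw [mulVecE_smul_left, real_inner_smul_right, mul_assoc, mul_assoc]
    exact ⟨mul_le_mul_of_nonneg_left (hell x z).1 hε.le,
      mul_le_mul_of_nonneg_left (hell x z).2 hε.le⟩
  have hbdd : ∀ {β : ℝ}, 0 < β → ∀ y : EuclideanSpace ℝ (Fin d),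
      Integrable (fun x => Real.exp (-β * ‖y - M x‖ ^ 2)) Λ := by
    intro β hβ y
    refine Integrable.of_bound (C := 1)
      (Measurable.aestronglyMeasurable (by fun_prop)) (Filter.Eventually.of_forall fun x => ?_)
    rw [Real.norm_eq_abs, Real.abs_exp, Real.exp_le_one_iff]
    have : 0 ≤ β * ‖y - M x‖ ^ 2 := by positivity
    linarith
  have ha0 : ∀ y, 0 ≤ ∫ x, gaussianDensityM (M x) (ε • V x) y ∂Λ :=
    fun y => integral_nonneg fun x => (hg x y).1
  have hexp : ∀ t : ℝ, Real.exp (-b * t) ^ r = Real.exp (-(b * r) * t) := by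
    intro t
    rw [← Real.exp_mul]
    ring_nf
  have hpt : ∀ y, (∫ x, gaussianDensityM (M x) (ε • V x) y ∂Λ) ^ r ≤
      C ^ r * ∫ x, Real.exp (-(b * r) * ‖y - M x‖ ^ 2) ∂Λ := by
    intro y
    have h1 : ∫ x, gaussianDensityM (M x) (ε • V x) y ∂Λ ≤
        C * ∫ x, Real.exp (-b * ‖y - M x‖ ^ 2) ∂Λ := by
      rw [← integral_const_mul]
      exact integral_mono_of_nonneg (Filter.Eventually.of_forall fun x => (hg x y).1)
        ((hbdd hb0 y).const_mul C) (Filter.Eventually.of_forall fun x => (hg x y).2)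
    -- Jensen's inequality for the convex function `t ↦ t ^ r`
    have h2 : (∫ x, Real.exp (-b * ‖y - M x‖ ^ 2) ∂Λ) ^ r ≤
        ∫ x, Real.exp (-b * ‖y - M x‖ ^ 2) ^ r ∂Λ := by
      refine (convexOn_rpow hr.le).map_integral_le
        (Real.continuous_rpow_const hr0.le).continuousOn isClosed_Ici
        (Filter.Eventually.of_forall fun x => (Real.exp_pos _).le) (hbdd hb0 y) ?_
      simp only [Function.comp_def, hexp]
      exact hbdd (mul_pos hb0 hr0) y
    simp only [hexp] at h2
    calc _ ≤ (C * ∫ x, Real.exp (-b * ‖y - M x‖ ^ 2) ∂Λ) ^ r :=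
          Real.rpow_le_rpow (ha0 y) h1 hr0.le
      _ = C ^ r * (∫ x, Real.exp (-b * ‖y - M x‖ ^ 2) ∂Λ) ^ r :=
          Real.mul_rpow hC0.le (integral_nonneg fun x => (Real.exp_pos _).le)
      _ ≤ _ := by gcongr
  have hint : ∫ y, (∫ x, gaussianDensityM (M x) (ε • V x) y ∂Λ) ^ r ≤
      C ^ r * (Real.pi / (b * r)) ^ ((d : ℝ) / 2) := by
    rw [← integral_integral_exp (mul_pos hb0 hr0) Λ hM, ← integral_const_mul]
    exact integral_mono_of_nonneg
      (Filter.Eventually.of_forall fun y => Real.rpow_nonneg (ha0 y) r)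
      ((integrable_prod_exp (mul_pos hb0 hr0) Λ hM).integral_prod_right.const_mul _)
      (Filter.Eventually.of_forall hpt)
  have hI0 : 0 ≤ ∫ y, (∫ x, gaussianDensityM (M x) (ε • V x) y ∂Λ) ^ r :=
    integral_nonneg fun y => Real.rpow_nonneg (ha0 y) r
  refine (Real.rpow_le_rpow hI0 hint (by positivity)).trans_eq ?_
  have hvar : Real.pi / (b * r) = ε * (2 * Real.pi * c₀ / r) := by
    rw [hb]; field_simp
  clear_value C
  have hscale : 0 ≤ (ε * (2 * Real.pi * c₀ / r)) := by positivity
  rw [hvar, Real.mul_rpow (by positivity) (by positivity), ← Real.rpow_mul hC0.le,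
    ← Real.rpow_mul hscale, mul_one_div_cancel hr0.ne', Real.rpow_one,
    show (d : ℝ) / 2 * (1 / r) = d / (2 * r) by field_simp,
    Real.mul_rpow hε.le (by positivity), hC,
    show 2 * Real.pi * (ε * κ) = ε * (2 * Real.pi * κ) by ring,
    Real.mul_rpow hε.le (by positivity)]
  -- the powers of `ε` combine because `1 / r' = 1 - 1 / r`
  have hεpow : ε ^ (-(d : ℝ) / (2 * r')) = ε ^ (-(d : ℝ) / 2) * ε ^ ((d : ℝ) / (2 * r)) := by
    rw [← Real.rpow_add hε, hr']
    congr 1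
    have : r - 1 ≠ 0 := by linarith
    field_simp
    ring
  rw [hεpow]
  ring
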